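/- Let f : ℝ × ℝ → ℝ be continuously differentiable, let T > 0, and let x : ℝ → ℝ be a nonconstant T-periodic C² solution of ẍ(t) = f(x(t), ẋ(t)) with x(0) = A, ẋ(0) = 0, and x(t) ≤ A for all t, and assume ẋ(t) ≠ 0 for all t ∈ (0, T/2) with x strictly decreasing on [0, T/2] down to B := x(T/2) and ẋ(T/2) = 0. Then there exists a continuous function φ : [B, A] → ℝ, C¹ on (B, A), such that φ(A) = 0, ẋ(t) = φ(x(t)) for all t ∈ [0, T/2], φ(x)·φ′(x) = f(x, φ(x)) for all x ∈ (B, A), and ∫_x^A f(s, φ(s)) ds ≤ 0 for all x ∈ [B, A]. -/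

import Mathlib

/-- Theorem 1 (necessity): a nonconstant `T`-periodic C² solution of `ẍ = f(x, ẋ)` with
amplitude `A = x 0`, `ẋ 0 = 0`, strictly decreasing on `[0, T/2]` down to `B = x (T/2)`,
admits a first-integral function `φ` with `ẋ = φ(x)` along `[0, T/2]`, satisfying
`φ·φ' = f(x, φ(x))` and `∫_x^A f(s, φ(s)) ds ≤ 0`. -/
theorem first_integral_necessity
    (f : ℝ × ℝ → ℝ) (hf : ContDiff ℝ 1 f)
    (T : ℝ) (hT : 0 < T) (x : ℝ → ℝ) (A B : ℝ)
    (hx : ContDiff ℝ 2 x)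
    (hper : Function.Periodic x T)
    (hnc : ∃ t s : ℝ, x t ≠ x s)
    (hODE : ∀ t : ℝ, deriv (deriv x) t = f (x t, deriv x t))
    (hx0 : x 0 = A) (hv0 : deriv x 0 = 0)
    (hmax : ∀ t : ℝ, x t ≤ A)
    (hvne : ∀ t ∈ Set.Ioo (0 : ℝ) (T / 2), deriv x t ≠ 0)
    (hdec : StrictAntiOn x (Set.Icc 0 (T / 2)))
    (hB : x (T / 2) = B)
    (hvhalf : deriv x (T / 2) = 0) :
    ∃ φ : ℝ → ℝ,
      ContinuousOn φ (Set.Icc B A) ∧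
      ContDiffOn ℝ 1 φ (Set.Ioo B A) ∧
      φ A = 0 ∧
      (∀ t ∈ Set.Icc (0 : ℝ) (T / 2), deriv x t = φ (x t)) ∧
      (∀ z ∈ Set.Ioo B A, φ z * deriv φ z = f (z, φ z)) ∧
      (∀ z ∈ Set.Icc B A, (∫ s in z..A, f (s, φ s)) ≤ 0) := by
  have hT2 : (0:ℝ) < T / 2 := by linarith
  set K : Set ℝ := Set.Icc 0 (T/2) with hK
  have h0K : (0:ℝ) ∈ K := ⟨le_refl _, hT2.le⟩
  have h1K : T/2 ∈ K := ⟨hT2.le, le_refl _⟩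
  have hBA : B < A := by
    rw [← hB, ← hx0]; exact hdec h0K h1K hT2
  have hxc : Continuous x := hx.continuous
  have hxd : Differentiable ℝ x := hx.differentiable (by norm_num)
  have hx1 : ContDiff ℝ 1 (deriv x) := by
    have h2 : ContDiff ℝ (1 + 1) x := by simpa [one_add_one_eq_two] using hx
    exact (contDiff_succ_iff_deriv.1 h2).2.2
  have hinj : Set.InjOn x K := hdec.injOn
  have himg : x '' K = Set.Icc B A := by
    apply Set.Subset.antisymm
    · rintro _ ⟨t, ht, rfl⟩
      refine ⟨?_, hmax t⟩
      rw [← hB]; exact hdec.antitoneOn ht h1K ht.2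
    · have := intermediate_value_Icc' hT2.le hxc.continuousOn
      rwa [hx0, hB] at this
  set g : ℝ → ℝ := Function.invFunOn x K with hg
  have hgl : ∀ t ∈ K, g (x t) = t := fun t ht => hinj.leftInvOn_invFunOn ht
  have hgm : ∀ z ∈ Set.Icc B A, g z ∈ K := fun z hz =>
    Function.invFunOn_mem (by rw [← himg] at hz; exact hz)
  have hgr : ∀ z ∈ Set.Icc B A, x (g z) = z := fun z hz =>
    Function.invFunOn_eq (by rw [← himg] at hz; exact hz)
  have hgc : ContinuousOn g (Set.Icc B A) := by
    rw [continuousOn_iff_isClosed]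
    intro C hC
    refine ⟨x '' (K ∩ C), ((isCompact_Icc.inter_right hC).image hxc).isClosed, ?_⟩
    ext z
    constructor
    · rintro ⟨h1, h2⟩
      exact ⟨⟨g z, ⟨hgm z h2, h1⟩, hgr z h2⟩, h2⟩
    · rintro ⟨⟨t, ⟨h1, h2⟩, rfl⟩, h3⟩
      refine ⟨?_, h3⟩
      change g (x t) ∈ C
      rw [hgl t h1]; exact h2
  have hgi : ∀ z ∈ Set.Ioo B A, g z ∈ Set.Ioo 0 (T/2) := by
    intro z hz
    have hz' := Set.Ioo_subset_Icc_self hz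
    obtain ⟨h1, h2⟩ := hgm z hz'
    have h3 := hgr z hz'
    refine ⟨lt_of_le_of_ne h1 ?_, lt_of_le_of_ne h2 ?_⟩
    · intro h
      rw [← h, hx0] at h3
      exact hz.2.ne h3.symm
    · intro h
      rw [h, hB] at h3
      exact hz.1.ne h3
  have hgd : ∀ z ∈ Set.Ioo B A, HasDerivAt g (deriv x (g z))⁻¹ z := by
    intro z hz
    refine HasDerivAt.of_local_left_inverse
      (hgc.continuousAt (Icc_mem_nhds hz.1 hz.2)) (hxd (g z)).hasDerivAt (hvne _ (hgi z hz)) ?_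
    filter_upwards [Icc_mem_nhds hz.1 hz.2] with y hy using hgr y hy
  set φ : ℝ → ℝ := fun z => deriv x (g z) with hφ
  have hφc : ContinuousOn φ (Set.Icc B A) := hx1.continuous.comp_continuousOn hgc
  have hφne : ∀ z ∈ Set.Ioo B A, φ z ≠ 0 := fun z hz => hvne _ (hgi z hz)
  have hφd : ∀ z ∈ Set.Ioo B A, HasDerivAt φ (f (z, φ z) * (φ z)⁻¹) z := by
    intro z hz
    have h1 := ((hx1.differentiable (by norm_num)) (g z)).hasDerivAt
    rw [hODE, hgr z (Set.Ioo_subset_Icc_self hz)] at h1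
    exact h1.comp z (hgd z hz)
  have hfc : ContinuousOn (fun z => f (z, φ z)) (Set.Icc B A) :=
    hf.continuous.comp_continuousOn (continuousOn_id.prodMk hφc)
  have hφA : φ A = 0 := by
    have : g A = 0 := by rw [← hx0]; exact hgl 0 h0K
    simp only [hφ, this, hv0]
  refine ⟨φ, hφc, ?_, hφA, ?_, ?_, ?_⟩
  · have h2 : ContDiffOn ℝ (0 + 1) φ (Set.Ioo B A) := by
      rw [contDiffOn_succ_iff_deriv_of_isOpen isOpen_Ioo]
      refine ⟨fun z hz => (hφd z hz).differentiableAt.differentiableWithinAt, by simp, ?_⟩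
      rw [contDiffOn_zero]
      refine ContinuousOn.congr (f := fun z => f (z, φ z) * (φ z)⁻¹) ?_ (fun z hz => (hφd z hz).deriv)
      exact (hfc.mono Set.Ioo_subset_Icc_self).mul
        ((hφc.mono Set.Ioo_subset_Icc_self).inv₀ hφne)
    simpa using h2
  · intro t ht
    simp only [hφ, hgl t ht]
  · intro z hz
    rw [(hφd z hz).deriv]
    have := hφne z hz
    field_simp
  · intro z hz
    have hsub : Set.Icc z A ⊆ Set.Icc B A := Set.Icc_subset_Icc_left hz.1
    have key := intervalIntegral.integral_eq_sub_of_hasDerivAt_of_le (a := z) (b := A)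
      (f := fun s => φ s ^ 2 / 2) (f' := fun s => f (s, φ s)) hz.2
      (((hφc.mono hsub).pow 2).div_const 2)
      (fun s hs => by
        have hs' : s ∈ Set.Ioo B A := ⟨lt_of_le_of_lt hz.1 hs.1, hs.2⟩
        have h := ((hφd s hs').pow 2).div_const 2
        have hne := hφne s hs'
        refine h.congr_deriv ?_
        field_simp
        norm_num
        ring)
      ((hfc.mono hsub).intervalIntegrable_of_Icc hz.2)
    rw [key, hφA]
    have := sq_nonneg (φ z)
    linarith
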